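/- arXiv:cs/0110010 — 4 statements merged into one kernel-verified Lean document; each statement's English description precedes it below -/
import Mathlib

section
/- For every clock valuation v, every δ ≥ 0, and every i ∈ K⁺, the fractional part of clock x_i in the relative representation is unchanged by a synchronous clock progress: fract(rel(v+δ))(i) = fract(rel(v))(i), where v+δ denotes the valuation j ↦ v(j)+δ. -/
open scoped BigOperators

namespace PTApaper

/-! ## Clock valuations -/

/-- A (raw) clock valuation on clocks `x_0, …, x_k`. -/
abbrev Val (k : ℕ) := Fin (k+1) → ℝ

/-- A discrete clock valuation. -/
abbrev DVal (k : ℕ) := Fin (k+1) → ℕ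

/-- A clock valuation takes nonnegative values. -/
def IsVal {k : ℕ} (v : Val k) : Prop := ∀ i, 0 ≤ v i

/-- A valuation is initial if the auxiliary clock `x_0` has value 0. -/
def Initial {k : ℕ} (v : Val k) : Prop := v 0 = 0

/-- The integral part `int(v)` of a valuation. -/
noncomputable def intPart {k : ℕ} (v : Val k) : DVal k := fun i => (⌊v i⌋).toNat

/-- The fractional parts of the relative representation `rel(v)`:
`fract(rel(v))(0) = fract (1 - fract (v 0))` and
`fract(rel(v))(i) = fract (fract (v i) + fract(rel(v))(0))` for `i ∈ K⁺`. -/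
noncomputable def relFract {k : ℕ} (v : Val k) : Fin (k+1) → ℝ := fun i =>
  if i = 0 then Int.fract (1 - Int.fract (v 0))
  else Int.fract (Int.fract (v i) + Int.fract (1 - Int.fract (v 0)))

/-- Synchronous clock progress `v + δ`. -/
def shift {k : ℕ} (v : Val k) (δ : ℝ) : Val k := fun i => v i + δ

/-- Clock reset `v↓_r`. -/
def resetVal {k : ℕ} (r : Finset (Fin (k+1))) (v : Val k) : Val k :=
  fun i => if i ∈ r then 0 else v i

/-! ## Patterns -/

/-- A raw pattern: a finite sequence of subsets of `K⁰ ∪ K¹`, where the index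
`(i, false)` stands for `i⁰` and `(i, true)` stands for `i¹`. -/
abbrev PatSeq (k : ℕ) := List (Finset (Fin (k+1) × Bool))

/-- The well-formedness conditions making `η = p₀,…,p_n` a pattern:
`0 ≤ n < 2(k+1)`, the `p_m` are nonempty and pairwise disjoint, `0⁰ ∈ p₀`,
and `p₀ ∪ … ∪ p_n = K⁰ ∪ K¹`. -/
def IsPattern {k : ℕ} (η : PatSeq k) : Prop :=
  η.length ≤ 2*(k+1) ∧
  (∀ p ∈ η, p.Nonempty) ∧
  η.Pairwise Disjoint ∧
  ((0 : Fin (k+1)), false) ∈ η.getD 0 ∅ ∧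
  (∀ x : Fin (k+1) × Bool, ∃ p ∈ η, x ∈ p)

/-- `bval v₀ v₁ b` is `v_b`. -/
def bval {k : ℕ} (v₀ v₁ : Val k) : Bool → Val k
  | false => v₀
  | true => v₁

/-- The defining ordering condition for "`(v₀,v₁)` has pattern `η = p₀,…,p_n`":
for all positions `m, m'`, copies `b, b'` and clocks `i, i'` with `i^b ∈ p_m` and
`i'^{b'} ∈ p_{m'}`, `fract(rel(v_b))(i) = fract(rel(v_{b'}))(i')` iff `m = m'`, and
`fract(rel(v_b))(i) < fract(rel(v_{b'}))(i')` iff `m < m'`. -/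
def HasPatternOrd {k : ℕ} (v₀ v₁ : Val k) (η : PatSeq k) : Prop :=
  ∀ m m' : Fin η.length, ∀ b b' : Bool, ∀ i i' : Fin (k+1),
    (i, b) ∈ η.get m → (i', b') ∈ η.get m' →
      ((relFract (bval v₀ v₁ b) i = relFract (bval v₀ v₁ b') i' ↔ m = m') ∧
       (relFract (bval v₀ v₁ b) i < relFract (bval v₀ v₁ b') i' ↔ (m : ℕ) < (m' : ℕ)))

/-- `(v₀,v₁)` has pattern `η` (written `[(v₀,v₁)] = η`). -/
def PatternOf {k : ℕ} (v₀ v₁ : Val k) (η : PatSeq k) : Prop :=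
  IsPattern η ∧ HasPatternOrd v₀ v₁ η

/-- A pattern is initial if it is the pattern of `(v₀,v₀)` for some initial valuation `v₀`. -/
def InitialPattern {k : ℕ} (η : PatSeq k) : Prop :=
  ∃ v₀ : Val k, IsVal v₀ ∧ Initial v₀ ∧ PatternOf v₀ v₀ η

/-- The equivalence `(v₀¹,v₁) ≈ (v₀²,v₂)`: same pattern and same integral parts. -/
def PairEquiv {k : ℕ} (va vb vc vd : Val k) : Prop :=
  (∃ η : PatSeq k, PatternOf va vb η ∧ PatternOf vc vd η) ∧
  intPart va = intPart vc ∧ intPart vb = intPart vd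

/-! ## now-position, Next, next, reset -/

/-- The index of the now-position, i.e. the position containing `0¹`. -/
def nowIdx {k : ℕ} (η : PatSeq k) : ℕ :=
  η.findIdx fun p => decide (((0 : Fin (k+1)), true) ∈ p)

/-- A merge-pattern: the now-position is the singleton `{0¹}`. -/
def IsMergePat {k : ℕ} (η : PatSeq k) : Prop :=
  η.getD (nowIdx η) ∅ = ({((0 : Fin (k+1)), true)} : Finset (Fin (k+1) × Bool))

/-- A split-pattern: a pattern that is not a merge-pattern. -/
def IsSplitPat {k : ℕ} (η : PatSeq k) : Prop := ¬ IsMergePat η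

/-- The next pattern `Next(η)`. -/
def NextPat {k : ℕ} (η : PatSeq k) : PatSeq k :=
  let i := nowIdx η
  if η.getD i ∅ = ({((0 : Fin (k+1)), true)} : Finset (Fin (k+1) × Bool)) then
    -- merge case : `p₀, …, p_{i-1} ∪ {0¹}, p_{i+1}, …, p_n`
    η.take (i-1) ++ [η.getD (i-1) ∅ ∪ {((0 : Fin (k+1)), true)}] ++ η.drop (i+1)
  else if i = 0 then
    -- split case with `i = 0` : `p₀ ∖ {0¹}, p₁, …, p_n, {0¹}`
    (η.getD 0 ∅ \ {((0 : Fin (k+1)), true)}) :: (η.drop 1 ++ [{((0 : Fin (k+1)), true)}])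
  else
    -- split case with `i > 0` : `p₀, …, p_{i-1}, {0¹}, p_i ∖ {0¹}, p_{i+1}, …, p_n`
    η.take i ++ [{((0 : Fin (k+1)), true)}, η.getD i ∅ \ {((0 : Fin (k+1)), true)}]
      ++ η.drop (i+1)

/-- The counter update of `next(η,u)`. -/
def nextD {k : ℕ} (η : PatSeq k) (u : DVal k) : DVal k :=
  let i := nowIdx η
  if η.getD i ∅ = ({((0 : Fin (k+1)), true)} : Finset (Fin (k+1) × Bool)) then
    fun j =>
      if j = 0 then (if i = 1 then u 0 + 1 else u 0)
      else (if (j, true) ∈ η.getD (i-1) ∅ then u j + 1 else u j)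
  else u

/-- `next(η,u)`. -/
def nextPair {k : ℕ} (η : PatSeq k) (u : DVal k) : PatSeq k × DVal k :=
  (NextPat η, nextD η u)

/-- The pattern part of `reset_r(η,u)`: all indices `j¹`, `j ∈ r`, are moved into the
now-position, and entries that become empty are deleted. -/
def ResetPat {k : ℕ} (r : Finset (Fin (k+1))) (η : PatSeq k) : PatSeq k :=
  let r1 : Finset (Fin (k+1) × Bool) := r.image (fun j => (j, true))
  let i := nowIdx η
  (η.mapIdx (fun m p => if m = i then p ∪ r1 else p \ r1)).filter (fun p => decide (p ≠ ∅))

/-- The counter update of `reset_r(η,u)`. -/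
def resetD {k : ℕ} (r : Finset (Fin (k+1))) (u : DVal k) : DVal k :=
  fun j => if j ∈ r then 0 else u j

/-- `reset_r(η,u)`. -/
def resetPair {k : ℕ} (r : Finset (Fin (k+1))) (η : PatSeq k) (u : DVal k) :
    PatSeq k × DVal k :=
  (ResetPat r η, resetD r u)

/-! ## Pattern changes -/

/-- `v` has no pattern change for `δ`. -/
def NoChange {k : ℕ} (v₀ v : Val k) (δ : ℝ) : Prop :=
  ∃ η : PatSeq k, PatternOf v₀ v η ∧
    ∀ δ', 0 ≤ δ' → δ' ≤ δ → PatternOf v₀ (shift v δ') η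

/-- `v` has one pattern change for `δ`. -/
def OneChange {k : ℕ} (v₀ v : Val k) (δ : ℝ) : Prop :=
  ∃ η η' : PatSeq k, PatternOf v₀ v η ∧ PatternOf v₀ (shift v δ) η' ∧
    NextPat η = η' ∧
    ((∀ δ', 0 < δ' → δ' < δ → PatternOf v₀ (shift v δ') η) ∨
     (∀ δ', 0 < δ' → δ' < δ → PatternOf v₀ (shift v δ') η'))

/-- `v` has `n` pattern changes for `δ` (for `n ≥ 1`): `δ = δ₁ + … + δ_n` with each
`δ_j > 0` and `v + δ₁ + … + δ_j` has one pattern change for `δ_{j+1}`. -/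
def NChanges {k : ℕ} (v₀ v : Val k) (n : ℕ) (δ : ℝ) : Prop :=
  ∃ d : ℕ → ℝ, (∀ j < n, 0 < d j) ∧ (∑ j ∈ Finset.range n, d j) = δ ∧
    ∀ j < n, OneChange v₀ (shift v (∑ j' ∈ Finset.range j, d j')) (d j)

/-! ## Clock constraints -/

/-- Comparison operators `<, ≤, =, ≥, >`. -/
inductive CCmp | lt | le | eq | ge | gt

/-- Evaluation of a comparison operator on reals. -/
def CCmp.evalR : CCmp → ℝ → ℝ → Prop
  | .lt, a, b => a < b
  | .le, a, b => a ≤ b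
  | .eq, a, b => a = b
  | .ge, a, b => a ≥ b
  | .gt, a, b => a > b

/-- Clock constraints over the clocks `x_1, …, x_k` (indexed by `Fin k`, clock
`x_{i+1}` for `i : Fin k`): Boolean combinations of `x_i - x_j # d` and `x_i # d`. -/
inductive CC (k : ℕ)
  | diff (i j : Fin k) (op : CCmp) (d : ℕ) : CC k
  | single (i : Fin k) (op : CCmp) (d : ℕ) : CC k
  | not (c : CC k) : CC k
  | and (c₁ c₂ : CC k) : CC k

/-- `v ∈ c` : the valuation `v` satisfies the clock constraint `c`. -/
def CC.sat {k : ℕ} (v : Val k) : CC k → Prop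
  | .diff i j op d => op.evalR (v i.succ - v j.succ) (d : ℝ)
  | .single i op d => op.evalR (v i.succ) (d : ℝ)
  | .not c => ¬ c.sat v
  | .and c₁ c₂ => c₁.sat v ∧ c₂.sat v

/-- The position (in `η`) of an index `x ∈ K⁰ ∪ K¹`. -/
def posOf {k : ℕ} (η : PatSeq k) (x : Fin (k+1) × Bool) : ℕ :=
  η.findIdx fun p => decide (x ∈ p)

/-- The truth value, given by pattern `η`, of the fractional ordering
`fract(x_a) > fract(x_b)`. -/
def fracGtP {k : ℕ} (η : PatSeq k) (a b : Fin (k+1)) : Prop :=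
  let i := posOf η ((0 : Fin (k+1)), true)
  let m₁ := posOf η (a, true)
  let m₂ := posOf η (b, true)
  (m₁ < i ∧ i ≤ m₂) ∨ (m₂ < m₁ ∧ m₁ < i) ∨ (i ≤ m₂ ∧ m₂ < m₁)

/-- The truth value, given by pattern `η`, of `fract(x_a) = fract(x_b)`. -/
def fracEqP {k : ℕ} (η : PatSeq k) (a b : Fin (k+1)) : Prop :=
  posOf η (a, true) = posOf η (b, true)

/-- The truth value, given by pattern `η`, of `fract(x_a) = 0`. -/
def fracZeroP {k : ℕ} (η : PatSeq k) (a : Fin (k+1)) : Prop :=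
  posOf η (a, true) = posOf η ((0 : Fin (k+1)), true)

/-- `u ∈ c^η` : the discrete valuation `u` satisfies the constraint `c^η`, obtained by
rewriting `c` as `I(c)` over integral parts and fractional orderings and substituting the
truth values of the fractional orderings determined by the pattern `η`. -/
def CC.satP {k : ℕ} (η : PatSeq k) (u : DVal k) : CC k → Prop
  | .diff i j op d =>
      let I : ℤ := (u i.succ : ℤ) - (u j.succ : ℤ)
      (match op with
      | .lt => I < d ∨ (I = d ∧ fracGtP η j.succ i.succ)
      | .le => I < d ∨ (I = d ∧ (fracGtP η j.succ i.succ ∨ fracEqP η i.succ j.succ))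
      | .eq => I = d ∧ fracEqP η i.succ j.succ
      | .ge => I > d ∨ (I = d ∧ (fracGtP η i.succ j.succ ∨ fracEqP η i.succ j.succ))
      | .gt => I > d ∨ (I = d ∧ fracGtP η i.succ j.succ))
  | .single i op d =>
      let I : ℤ := (u i.succ : ℤ)
      (match op with
      | .lt => I < d
      | .le => I < d ∨ (I = d ∧ fracZeroP η i.succ)
      | .eq => I = d ∧ fracZeroP η i.succ
      | .ge => I ≥ d
      | .gt => I > d ∨ (I = d ∧ ¬ fracZeroP η i.succ))
  | .not c => ¬ c.satP η u
  | .and c₁ c₂ => c₁.satP η u ∧ c₂.satP η u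

/-! ## Pushdown timed automata -/

/-- A pushdown timed automaton `⟨S, {x₁,…,x_k}, Inv, R, Γ, PD⟩`:
`Inv` assigns an invariant to each state, `R s s' = (Rc s s', Rr s s')` assigns a reset
condition and a set of clock resets (a subset of `K⁺`) to each edge, and
`PD s s' = (PDa s s', PDw s s')` assigns a stack operation to each edge. -/
structure PTA (k : ℕ) (S : Type) (Γ : Type) where
  Inv : S → CC k
  Rc : S → S → CC k
  Rr : S → S → Finset (Fin (k+1))
  hRr : ∀ s s', (0 : Fin (k+1)) ∉ Rr s s'
  PDa : S → S → Γ
  PDw : S → S → List Γ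

/-- A configuration `(s, v, w)` of a PTA. -/
abbrev Config (k : ℕ) (S Γ : Type) := S × Val k × List Γ

/-- The one-step transition relation `→_A` of a PTA. -/
def Step {k : ℕ} {S Γ : Type} (A : PTA k S Γ) (c₁ c₂ : Config k S Γ) : Prop :=
  -- progress transition
  (c₁.1 = c₂.1 ∧ c₁.2.2 = c₂.2.2 ∧
    ∃ δ : ℝ, 0 < δ ∧ c₂.2.1 = shift c₁.2.1 δ ∧
      ∀ δ', 0 ≤ δ' → δ' ≤ δ → (A.Inv c₁.1).sat (shift c₁.2.1 δ')) ∨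
  -- reset transition
  ((A.Inv c₁.1).sat c₁.2.1 ∧ (A.Rc c₁.1 c₂.1).sat c₁.2.1 ∧
    c₂.2.1 = resetVal (A.Rr c₁.1 c₂.1) c₁.2.1 ∧ (A.Inv c₂.1).sat c₂.2.1 ∧
    ∃ w : List Γ, c₁.2.2 = A.PDa c₁.1 c₂.1 :: w ∧ c₂.2.2 = A.PDw c₁.1 c₂.1 ++ w)

/-- `→*_A`, the transitive closure of `→_A`. -/
def Reach {k : ℕ} {S Γ : Type} (A : PTA k S Γ) : Config k S Γ → Config k S Γ → Prop :=
  Relation.TransGen (Step A)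

/-- `(s₀,u₀,w₀) →*_{A,η} (s₁,u₁,w₁)`. -/
def ReachPat {k : ℕ} {S Γ : Type} (A : PTA k S Γ) (η : PatSeq k)
    (s₀ : S) (u₀ : DVal k) (w₀ : List Γ) (s₁ : S) (u₁ : DVal k) (w₁ : List Γ) : Prop :=
  ∃ v₀ v₁ : Val k, IsVal v₀ ∧ IsVal v₁ ∧ v₀ 0 = 0 ∧
    intPart v₀ = u₀ ∧ intPart v₁ = u₁ ∧ PatternOf v₀ v₁ η ∧
    Reach A (s₀, v₀, w₀) (s₁, v₁, w₁)

/-! ## The pattern graph -/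

/-- A configuration `(s, η, u, w)` of the pattern graph. -/
abbrev GConfig (k : ℕ) (S Γ : Type) := S × PatSeq k × DVal k × List Γ

/-- The one-step transition relation `→_G` of the pattern graph `G` of a PTA `A`,
through progress edges, stay edges and reset edges. -/
def GStep {k : ℕ} {S Γ : Type} (A : PTA k S Γ) (c₁ c₂ : GConfig k S Γ) : Prop :=
  -- progress edge
  (c₁.1 = c₂.1 ∧ c₁.2.2.2 = c₂.2.2.2 ∧
    nextPair c₁.2.1 c₁.2.2.1 = (c₂.2.1, c₂.2.2.1) ∧
    (A.Inv c₁.1).satP c₁.2.1 c₁.2.2.1 ∧ (A.Inv c₁.1).satP c₂.2.1 c₂.2.2.1) ∨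
  -- stay edge
  (c₁ = c₂ ∧ IsMergePat c₁.2.1 ∧ (A.Inv c₁.1).satP c₁.2.1 c₁.2.2.1) ∨
  -- reset edge
  (resetPair (A.Rr c₁.1 c₂.1) c₁.2.1 c₁.2.2.1 = (c₂.2.1, c₂.2.2.1) ∧
    ((A.Rc c₁.1 c₂.1).and (A.Inv c₁.1)).satP c₁.2.1 c₁.2.2.1 ∧
    (A.Inv c₂.1).satP c₂.2.1 c₂.2.2.1 ∧
    ∃ w : List Γ, c₁.2.2.2 = A.PDa c₁.1 c₂.1 :: w ∧ c₂.2.2.2 = A.PDw c₁.1 c₂.1 ++ w)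

/-- `→*_G`, the transitive closure of `→_G`. -/
def GReach {k : ℕ} {S Γ : Type} (A : PTA k S Γ) : GConfig k S Γ → GConfig k S Γ → Prop :=
  Relation.TransGen (GStep A)

end PTApaper
namespace PTApaper

section Fract

variable {R : Type*} [Ring R] [LinearOrder R] [FloorRing R] [IsOrderedRing R]

theorem fract_fract_add (a b : R) : Int.fract (Int.fract a + b) = Int.fract (a + b) := by
  rw [← Int.self_sub_floor a, sub_add_eq_add_sub, Int.fract_sub_intCast]

theorem fract_add_fract (a b : R) : Int.fract (a + Int.fract b) = Int.fract (a + b) := by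
  rw [add_comm, fract_fract_add, add_comm]

theorem fract_sub_fract (a b : R) : Int.fract (a - Int.fract b) = Int.fract (a - b) := by
  rw [← Int.self_sub_floor b, ← sub_add, Int.fract_add_intCast]

end Fract

theorem relFract_of_ne_zero {k : ℕ} (v : Val k) {i : Fin (k + 1)} (hi : i ≠ 0) :
    relFract v i = Int.fract (v i - v 0) :=
  calc relFract v i
      = Int.fract (Int.fract (v i) + Int.fract (1 - Int.fract (v 0))) := if_neg hi
    _ = Int.fract (v i + (1 - Int.fract (v 0))) := by rw [fract_fract_add, fract_add_fract]
    _ = Int.fract (v i + 1 - v 0) := by rw [← add_sub_assoc, fract_sub_fract]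
    _ = Int.fract (v i - v 0) := by rw [add_sub_right_comm, Int.fract_add_one]

theorem relFract_shift_general {k : ℕ} (v : Val k) (δ : ℝ) {i : Fin (k + 1)} (hi : i ≠ 0) :
    relFract (shift v δ) i = relFract v i := by
  simp only [relFract_of_ne_zero _ hi, shift, add_sub_add_right_eq_sub]

/-- For every clock valuation `v`, every `δ ≥ 0` and every `i ∈ K⁺`,
the fractional part of clock `x_i` in the relative representation is unchanged by a
synchronous clock progress: `fract(rel(v+δ))(i) = fract(rel(v))(i)`. -/
theorem relFract_shift (k : ℕ) (hk : 1 ≤ k) (v : Val k) (hv : IsVal v)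
    (δ : ℝ) (hδ : 0 ≤ δ) (i : Fin (k+1)) (hi : i ≠ 0) :
    relFract (shift v δ) i = relFract v i :=
  relFract_shift_general v δ hi

end PTApaper
end

section
/- Let η = p₀,…,p_n be a pattern of a valuation v, and assume 0¹ ∈ p_i for some 0 ≤ i ≤ n. Then for all m₁, m₂ with 0 ≤ m₁,m₂ ≤ n and all j₁, j₂ ∈ K⁺ with j₁¹ ∈ p_{m₁} and j₂¹ ∈ p_{m₂}: (1) fract(v)(j₁) > fract(v)(j₂) iff one of the following holds: m₁ < i ≤ m₂, or m₂ < m₁ < i, or i ≤ m₂ < m₁; (2) fract(v)(j₁) = fract(v)(j₂) iff m₁ = m₂; (3) fract(v)(j₁) > 0 iff m₁ ≠ i; (4) fract(v)(j₁) = 0 iff m₁ = i. -/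
open scoped BigOperators

namespace PTApaper

/-!
Relative representation rotates the circle `ℝ / ℤ` by `-v 0`, so for `j ≠ 0` one recovers
`fract (v j) = fract (x - c)` with `x = relFract v j` and `c = relFract v 0`. As `x` and `c` lie in
`[0, 1)`, this is `x - c` if `c ≤ x` and `x - c + 1` otherwise: undoing the rotation moves the
points below `c` past those above, keeps the order within both groups, and sends `c` itself to `0`.
The order of the points `x` and `c` is what the pattern records.
-/

section Rotation

variable {R : Type*} [CommRing R] [LinearOrder R] [IsStrictOrderedRing R] [FloorRing R] {a b c : R}

theorem fract_sub_eq_ite (ha : a ∈ Set.Ico 0 1) (hc : c ∈ Set.Ico 0 1) :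
    Int.fract (a - c) = if c ≤ a then a - c else a - c + 1 := by
  obtain ⟨ha₀, ha₁⟩ := ha
  obtain ⟨hc₀, hc₁⟩ := hc
  split_ifs with hca
  · exact Int.fract_eq_self.2 ⟨by linarith, by linarith⟩
  · rw [← Int.fract_add_one]
    exact Int.fract_eq_self.2 ⟨by linarith, by linarith⟩

theorem fract_sub_lt_fract_sub_iff (ha : a ∈ Set.Ico 0 1) (hb : b ∈ Set.Ico 0 1)
    (hc : c ∈ Set.Ico 0 1) :
    Int.fract (b - c) < Int.fract (a - c) ↔
      (a < c ∧ c ≤ b) ∨ (b < a ∧ a < c) ∨ (c ≤ b ∧ b < a) := by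
  rw [fract_sub_eq_ite ha hc, fract_sub_eq_ite hb hc]
  obtain ⟨ha₀, ha₁⟩ := ha
  obtain ⟨hb₀, hb₁⟩ := hb
  split_ifs <;> grind

theorem fract_sub_eq_fract_sub_iff (ha : a ∈ Set.Ico 0 1) (hb : b ∈ Set.Ico 0 1) :
    Int.fract (a - c) = Int.fract (b - c) ↔ a = b := by
  rw [Int.fract_eq_fract, sub_sub_sub_cancel_right, ← Int.fract_eq_fract,
    Int.fract_eq_self.2 ha, Int.fract_eq_self.2 hb]

theorem fract_sub_eq_zero_iff (ha : a ∈ Set.Ico 0 1) (hc : c ∈ Set.Ico 0 1) :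
    Int.fract (a - c) = 0 ↔ a = c := by
  simpa only [sub_self, Int.fract_zero] using fract_sub_eq_fract_sub_iff (c := c) ha hc

theorem fract_fract_sub (a b : R) : Int.fract (Int.fract a - b) = Int.fract (a - b) :=
  Int.fract_eq_fract.2 ⟨-⌊a⌋, by rw [Int.fract]; push_cast; ring⟩

end Rotation

section Pattern

variable {k : ℕ}

theorem relFract_mem_Ico (v : Val k) (j : Fin (k + 1)) : relFract v j ∈ Set.Ico 0 1 := by
  unfold relFract
  split_ifs <;> exact ⟨Int.fract_nonneg _, Int.fract_lt_one _⟩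

theorem fract_relFract_sub_relFract_zero (v : Val k) {j : Fin (k + 1)} (hj : j ≠ 0) :
    Int.fract (relFract v j - relFract v 0) = Int.fract (v j) := by
  simp only [relFract, hj, if_true, if_false]
  rw [fract_fract_sub, add_sub_cancel_right, Int.fract_fract]

namespace HasPatternOrd

variable {v₀ v : Val k} {η : PatSeq k} {m m' : Fin η.length} {j j' : Fin (k + 1)}

theorem relFract_eq_iff (hη : HasPatternOrd v₀ v η)
    (hj : (j, true) ∈ η.get m) (hj' : (j', true) ∈ η.get m') :
    relFract v j = relFract v j' ↔ m = m' :=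
  (hη m m' true true j j' hj hj').1

theorem relFract_lt_iff (hη : HasPatternOrd v₀ v η)
    (hj : (j, true) ∈ η.get m) (hj' : (j', true) ∈ η.get m') :
    relFract v j < relFract v j' ↔ m < m' :=
  (hη m m' true true j j' hj hj').2

theorem relFract_le_iff (hη : HasPatternOrd v₀ v η)
    (hj : (j, true) ∈ η.get m) (hj' : (j', true) ∈ η.get m') :
    relFract v j ≤ relFract v j' ↔ m ≤ m' :=
  le_iff_le_iff_lt_iff_lt.2 (hη.relFract_lt_iff hj' hj)

end HasPatternOrd

theorem densetest_general {v₀ v : Val k} {η : PatSeq k} (hη : HasPatternOrd v₀ v η)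
    {i m₁ m₂ : Fin η.length} {j₁ j₂ : Fin (k + 1)} (hj₁ : j₁ ≠ 0) (hj₂ : j₂ ≠ 0)
    (hi : (0, true) ∈ η.get i) (h₁ : (j₁, true) ∈ η.get m₁) (h₂ : (j₂, true) ∈ η.get m₂) :
    (Int.fract (v j₂) < Int.fract (v j₁) ↔
      (m₁ < i ∧ i ≤ m₂) ∨ (m₂ < m₁ ∧ m₁ < i) ∨ (i ≤ m₂ ∧ m₂ < m₁)) ∧
    (Int.fract (v j₁) = Int.fract (v j₂) ↔ m₁ = m₂) ∧
    (0 < Int.fract (v j₁) ↔ m₁ ≠ i) ∧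
    (Int.fract (v j₁) = 0 ↔ m₁ = i) := by
  have mem_Ico := relFract_mem_Ico v
  have zero_iff : Int.fract (v j₁) = 0 ↔ m₁ = i := by
    rw [← fract_relFract_sub_relFract_zero v hj₁,
      fract_sub_eq_zero_iff (mem_Ico j₁) (mem_Ico 0), hη.relFract_eq_iff h₁ hi]
  refine ⟨?_, ?_, (Int.fract_nonneg _).lt_iff_ne'.trans zero_iff.not, zero_iff⟩
  · rw [← fract_relFract_sub_relFract_zero v hj₁, ← fract_relFract_sub_relFract_zero v hj₂,
      fract_sub_lt_fract_sub_iff (mem_Ico j₁) (mem_Ico j₂) (mem_Ico 0),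
      hη.relFract_lt_iff h₁ hi, hη.relFract_le_iff hi h₂, hη.relFract_lt_iff h₂ h₁]
  · rw [← fract_relFract_sub_relFract_zero v hj₁, ← fract_relFract_sub_relFract_zero v hj₂,
      fract_sub_eq_fract_sub_iff (mem_Ico j₁) (mem_Ico j₂), hη.relFract_eq_iff h₁ h₂]

end Pattern

/-- Lemma `densetest`. Let `η = p₀,…,p_n` be a pattern of a valuation
`v` and assume `0¹ ∈ p_i`. Then for all positions `m₁, m₂` and clocks `j₁, j₂ ∈ K⁺` with
`j₁¹ ∈ p_{m₁}` and `j₂¹ ∈ p_{m₂}`: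
(1) `fract(v)(j₁) > fract(v)(j₂)` iff `m₁ < i ≤ m₂`, or `m₂ < m₁ < i`, or `i ≤ m₂ < m₁`;
(2) `fract(v)(j₁) = fract(v)(j₂)` iff `m₁ = m₂`;
(3) `fract(v)(j₁) > 0` iff `m₁ ≠ i`;
(4) `fract(v)(j₁) = 0` iff `m₁ = i`. -/
theorem densetest (k : ℕ) (hk : 1 ≤ k) (v v₀ : Val k)
    (hv : IsVal v) (hv₀ : IsVal v₀) (h0 : Initial v₀)
    (η : PatSeq k) (hη : PatternOf v₀ v η)
    (i m₁ m₂ : Fin η.length)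
    (hi : ((0 : Fin (k+1)), true) ∈ η.get i)
    (j₁ j₂ : Fin k)
    (h₁ : (j₁.succ, true) ∈ η.get m₁) (h₂ : (j₂.succ, true) ∈ η.get m₂) :
    (Int.fract (v j₁.succ) > Int.fract (v j₂.succ) ↔
      ((m₁ : ℕ) < i ∧ (i : ℕ) ≤ m₂) ∨ ((m₂ : ℕ) < m₁ ∧ (m₁ : ℕ) < i) ∨
        ((i : ℕ) ≤ m₂ ∧ (m₂ : ℕ) < m₁)) ∧
    (Int.fract (v j₁.succ) = Int.fract (v j₂.succ) ↔ m₁ = m₂) ∧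
    (Int.fract (v j₁.succ) > 0 ↔ m₁ ≠ i) ∧
    (Int.fract (v j₁.succ) = 0 ↔ m₁ = i) := by
  exact densetest_general hη.2 j₁.succ_ne_zero j₂.succ_ne_zero hi h₁ h₂

end PTApaper
end

section
/- The function Next on patterns is injective and has no fixed point: for all patterns η, η', if Next(η) = Next(η') then η = η', and Next(η) ≠ η for every pattern η. -/
open scoped BigOperators

namespace PTApaper

/-!
Write `z` for `0¹`. `Next` moves `z` one place to the left: out of a singleton `{z}` into the
preceding set, or out of a larger set into a new singleton directly before it, where a `z` leaving
`p₀` re-enters as a new last set. The result shows which move was made, since a merge leaves `z` in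
a set with other elements, and the two kinds of split leave `{z}` last or not last. Hence every
move can be undone. Each move changes the number of sets by one, so `Next` has no fixed point.
-/

theorem exists_eq_append_cons_of_pairwise_disjoint {α : Type*} {η : List (Finset α)}
    {q : Finset α} {x : α} (hη : η.Pairwise Disjoint) (hq : q ∈ η) (hx : x ∈ q) :
    ∃ A B, η = A ++ q :: B ∧ (∀ a ∈ A, x ∉ a) ∧ ∀ b ∈ B, x ∉ b := by
  obtain ⟨A, B, rfl⟩ := List.append_of_mem hq
  rw [List.pairwise_append, List.pairwise_cons] at hη
  obtain ⟨-, ⟨hqB, -⟩, hAq⟩ := hη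
  exact ⟨A, B, rfl,
    fun a ha => Finset.disjoint_right.1 (hAq a ha q List.mem_cons_self) hx,
    fun b hb => Finset.disjoint_left.1 (hqB b hb) hx⟩

theorem insert_ne_singleton {α : Type*} [DecidableEq α] {p : Finset α} {z : α} (hzp : z ∉ p)
    (hp : p.Nonempty) : insert z p ≠ {z} := by
  intro h
  apply hp.ne_empty
  rw [← Finset.erase_insert hzp, h, Finset.erase_singleton]

section NextStep

variable {α : Type*} [DecidableEq α] {z : α} {η ξ : List (Finset α)}

/-- The moves that `Next` makes on a sequence of sets with marked element `z = 0¹`: `merge` acts on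
merge-patterns, `wrap` on split-patterns with now-position `p₀`, and `split` on the other
split-patterns. As a relation it also allows `split` at `p₀`; a target still has only one source. -/
inductive NextStep (z : α) : List (Finset α) → List (Finset α) → Prop
  | merge {A : List (Finset α)} {p : Finset α} (B : List (Finset α)) (hA : ∀ a ∈ A, z ∉ a)
      (hzp : z ∉ p) (hp : p.Nonempty) :
      NextStep z (A ++ p :: {z} :: B) (A ++ insert z p :: B)
  | wrap {p : Finset α} {B : List (Finset α)} (hpB : ∀ a ∈ p :: B, z ∉ a) :
      NextStep z (insert z p :: B) (p :: B ++ [{z}])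
  | split {A : List (Finset α)} (p : Finset α) (B : List (Finset α)) (hA : ∀ a ∈ A, z ∉ a) :
      NextStep z (A ++ insert z p :: B) (A ++ {z} :: p :: B)

/-- `undoStep z A C` is the sequence from which `A ++ C` arises by a `NextStep z`, where `C` starts
at the first set containing `z`. If there is no such set, the value `A` is arbitrary. -/
def undoStep (z : α) (A : List (Finset α)) : List (Finset α) → List (Finset α)
  | [] => A
  | q :: B =>
    if q = {z} then
      match B with
      | [] => A.modifyHead (insert z)
      | p :: B => A ++ insert z p :: B
    else A ++ q.erase z :: {z} :: B

/-- The inverse of `NextStep z`: the only possible source of a step into `η`. -/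
def prevSeq (z : α) (η : List (Finset α)) : List (Finset α) :=
  undoStep z (η.takeWhile (z ∉ ·)) (η.dropWhile (z ∉ ·))

theorem prevSeq_append_cons {A : List (Finset α)} {q : Finset α} (B : List (Finset α))
    (hA : ∀ a ∈ A, z ∉ a) (hq : z ∈ q) :
    prevSeq z (A ++ q :: B) = undoStep z A (q :: B) := by
  have hA' : ∀ a ∈ A, decide (z ∉ a) = true := by simpa using hA
  rw [prevSeq, List.takeWhile_append_of_pos hA', List.dropWhile_append_of_pos hA']
  simp [hq]

theorem NextStep.prevSeq_eq (h : NextStep z η ξ) : prevSeq z ξ = η := by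
  cases h with
  | merge B hA hzp hp =>
    rw [prevSeq_append_cons B hA (Finset.mem_insert_self z _)]
    simp only [undoStep, if_neg (insert_ne_singleton hzp hp), Finset.erase_insert hzp]
  | wrap hpB =>
    rw [prevSeq_append_cons [] hpB (Finset.mem_singleton_self z)]
    simp only [undoStep, if_true, List.modifyHead_cons]
  | split p B hA =>
    rw [prevSeq_append_cons _ hA (Finset.mem_singleton_self z)]
    simp only [undoStep, if_true]

theorem NextStep.ne (h : NextStep z η ξ) : η ≠ ξ := by
  intro heq
  have hlen := congrArg List.length heq
  cases h <;> simp at hlen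

end NextStep

section NextPat

variable {k : ℕ} {η A B : PatSeq k} {p q : Finset (Fin (k + 1) × Bool)}

/-- The element `0¹` of `K⁰ ∪ K¹`. -/
abbrev zeroOne (k : ℕ) : Fin (k + 1) × Bool := (0, true)

theorem nowIdx_append_cons (hA : ∀ a ∈ A, zeroOne k ∉ a) (hq : zeroOne k ∈ q) :
    nowIdx (A ++ q :: B) = A.length := by
  have hlt : A.length < (A ++ q :: B).length := by simp
  rw [nowIdx, List.findIdx_eq hlt]
  refine ⟨by simpa using hq, fun j hj => ?_⟩
  simpa [List.getElem_append_left hj] using hA _ (List.getElem_mem hj)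

theorem nextPat_merge (hA : ∀ a ∈ A, zeroOne k ∉ a) (hzp : zeroOne k ∉ p) :
    NextPat (A ++ p :: {zeroOne k} :: B) = A ++ insert (zeroOne k) p :: B := by
  have hAp : ∀ a ∈ A ++ [p], zeroOne k ∉ a :=
    List.forall_mem_append.2 ⟨hA, List.forall_mem_singleton.2 hzp⟩
  have hnow : nowIdx (A ++ p :: {zeroOne k} :: B) = A.length + 1 := by
    simpa using nowIdx_append_cons (B := B) hAp (Finset.mem_singleton_self _)
  simp [NextPat, hnow, List.drop_append, Nat.add_assoc]

theorem nextPat_wrap (hzp : zeroOne k ∉ p) (hp : p.Nonempty) :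
    NextPat (insert (zeroOne k) p :: B) = p :: B ++ [{zeroOne k}] := by
  have hnow : nowIdx (insert (zeroOne k) p :: B) = 0 :=
    nowIdx_append_cons (A := []) (by simp) (Finset.mem_insert_self _ _)
  simp [NextPat, hnow, insert_ne_singleton hzp hp, Finset.sdiff_singleton_eq_erase,
    Finset.erase_insert hzp]

theorem nextPat_split (hA : ∀ a ∈ A, zeroOne k ∉ a) (hA₀ : A ≠ []) (hzp : zeroOne k ∉ p)
    (hp : p.Nonempty) :
    NextPat (A ++ insert (zeroOne k) p :: B) = A ++ {zeroOne k} :: p :: B := by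
  have hnow : nowIdx (A ++ insert (zeroOne k) p :: B) = A.length :=
    nowIdx_append_cons hA (Finset.mem_insert_self _ _)
  simp [NextPat, hnow, hA₀, insert_ne_singleton hzp hp, Finset.sdiff_singleton_eq_erase,
    Finset.erase_insert hzp]

namespace IsPattern

theorem ne_nil_of_append_singleton (h : IsPattern (A ++ {zeroOne k} :: B)) : A ≠ [] := by
  obtain ⟨-, -, -, hfirst, -⟩ := h
  rintro rfl
  simp at hfirst

theorem nextStep_of_merge (h : IsPattern (A ++ {zeroOne k} :: B))
    (hA : ∀ a ∈ A, zeroOne k ∉ a) :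
    NextStep (zeroOne k) (A ++ {zeroOne k} :: B) (NextPat (A ++ {zeroOne k} :: B)) := by
  obtain ⟨A, p, rfl⟩ := (List.eq_nil_or_concat' A).resolve_left h.ne_nil_of_append_singleton
  obtain ⟨-, hne, -⟩ := h
  obtain ⟨hA, hzp⟩ := List.forall_mem_append.1 hA
  rw [List.forall_mem_singleton] at hzp
  rw [List.append_assoc, List.singleton_append, nextPat_merge hA hzp]
  exact .merge B hA hzp (hne p (by simp))

theorem nextStep (h : IsPattern η) : NextStep (zeroOne k) η (NextPat η) := by
  obtain ⟨-, -, hdisj, -, hcover⟩ := id h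
  obtain ⟨q, hq, hzq⟩ := hcover (zeroOne k)
  obtain ⟨A, B, rfl, hA, hB⟩ := exists_eq_append_cons_of_pairwise_disjoint hdisj hq hzq
  by_cases hmerge : q = {zeroOne k}
  · subst hmerge
    exact h.nextStep_of_merge hA
  obtain ⟨p, hzp, rfl⟩ : ∃ p, zeroOne k ∉ p ∧ insert (zeroOne k) p = q :=
    ⟨q.erase _, Finset.notMem_erase _ _, Finset.insert_erase hzq⟩
  have hp : p.Nonempty := by
    rw [Finset.nonempty_iff_ne_empty]
    rintro rfl
    exact hmerge rfl
  by_cases hA₀ : A = []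
  · subst hA₀
    rw [List.nil_append, nextPat_wrap hzp hp]
    exact .wrap (List.forall_mem_cons.2 ⟨hzp, hB⟩)
  · rw [nextPat_split hA hA₀ hzp hp]
    exact .split p B hA

end IsPattern

end NextPat

/-- `Next` is injective on patterns and has no fixed point. -/
theorem next_injective_no_fixed_point (k : ℕ) (hk : 1 ≤ k) :
    (∀ η η' : PatSeq k, IsPattern η → IsPattern η' →
      NextPat η = NextPat η' → η = η') ∧
    (∀ η : PatSeq k, IsPattern η → NextPat η ≠ η) := by
  refine ⟨fun η η' h h' heq => ?_, fun η h => h.nextStep.ne.symm⟩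
  rw [← h.nextStep.prevSeq_eq, heq, h'.nextStep.prevSeq_eq]

end PTApaper
end

section
/- For any initialized pair (v₀,v) of clock valuations and any δ > 0, the following are equivalent: (1) next([(v₀,v)], int(v)) = ([(v₀,v+δ)], int(v+δ)); (2) v has one pattern change for δ. -/
open scoped BigOperators

namespace PTApaper

/-!
Read the relative positions `fract(rel(·))` as points of a circle. As time passes, the position of
`0¹` moves backwards at unit speed and all other positions stay put, so patterns change only when
`0¹` meets or leaves another position. For an initialized pair, `0¹` meets the fixed position of
`j¹` (of `0⁰`, if `j = 0`) exactly when the clock `j` becomes integral. Hence, if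
`[(v₀, v + δ)] = Next [(v₀, v)]`, the counter update of `next` is correct iff no clock becomes
integral strictly between the times `0` and `δ`.

For the clock `0` this means that `0¹` does not wrap around the circle, and then it crosses no
other position, since the two patterns are consecutive. Conversely, if the pattern is constant
strictly between `0` and `δ`, then `0¹`, being in motion, shares its position with nothing.
-/

section Floor

variable {R : Type*} [Field R] [LinearOrder R] [IsStrictOrderedRing R] [FloorRing R]

lemma forall_fract_add_ne_zero_iff (a δ : R) :
    (∀ d, 0 < d → d < δ → Int.fract (a + d) ≠ 0) ↔ δ ≤ 1 - Int.fract a := by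
  constructor
  · intro h
    by_contra! hlt
    refine h (1 - Int.fract a) (by linarith [Int.fract_lt_one a]) hlt ?_
    rw [show a + (1 - Int.fract a) = ((⌊a⌋ + 1 : ℤ) : R) by push_cast; rw [Int.fract]; ring,
      Int.fract_intCast]
  · intro hδ d hd hdδ
    have hfract : Int.fract (a + d) = Int.fract a + d :=
      Int.fract_eq_iff.2 ⟨by linarith [Int.fract_nonneg a], by linarith, ⌊a⌋, by
        rw [Int.fract]; ring⟩
    linarith [Int.fract_nonneg a]

lemma exists_fract_add_ne_zero (a : R) {δ : R} (hδ : 0 < δ) :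
    ∃ d, 0 < d ∧ d < δ ∧ Int.fract (a + d) ≠ 0 := by
  obtain ⟨d, hd, hdmin⟩ := exists_between (lt_min hδ (sub_pos.2 (Int.fract_lt_one a)))
  exact ⟨d, hd, hdmin.trans_le (min_le_left _ _),
    (forall_fract_add_ne_zero_iff a _).2 (min_le_right _ _) d hd hdmin⟩

lemma floor_eq_ite_fract_iff (x : R) (m : ℤ) :
    ⌊x⌋ = (if Int.fract x = 0 then m + 1 else m) ↔ ⌈x⌉ = m + 1 := by
  split_ifs with hx
  · obtain ⟨n, rfl⟩ := Int.fract_eq_zero_iff.1 hx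
    rw [Int.floor_intCast, Int.ceil_intCast]
  · rw [(Int.ceil_eq_floor_add_one_iff_notMem x).2 (Int.fract_ne_zero_iff.1 hx), add_left_inj]

lemma floor_add_eq_ite_fract_iff (a : R) {δ : R} (hδ : 0 < δ) :
    ⌊a + δ⌋ = (if Int.fract (a + δ) = 0 then ⌊a⌋ + 1 else ⌊a⌋) ↔ δ ≤ 1 - Int.fract a := by
  rw [floor_eq_ite_fract_iff, Int.ceil_eq_iff, Int.fract]
  push_cast
  constructor
  · rintro ⟨-, hle⟩
    linarith
  · exact fun hle => ⟨by linarith [Int.floor_le a], by linarith⟩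

end Floor

section LevelSeq

variable {α β : Type*} [LinearOrder β] {f g : α → β} {A B η η' : List (Finset α)}
  {p : Finset α} {x y : α}

/-- `η` lists the level sets of `f` in increasing order of their values: the ordered partition that
a pattern is, for an arbitrary function in place of the relative positions. -/
structure IsLevelSeq (f : α → β) (η : List (Finset α)) : Prop where
  nonempty : ∀ p ∈ η, p.Nonempty
  cover : ∀ x, ∃ p ∈ η, x ∈ p
  eq_of_mem : ∀ p ∈ η, ∀ x ∈ p, ∀ y ∈ p, f x = f y
  pairwise_lt : η.Pairwise fun p q => ∀ x ∈ p, ∀ y ∈ q, f x < f y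

namespace IsLevelSeq

lemma trichotomy (h : IsLevelSeq f (A ++ p :: B)) (hy : y ∈ p) (x : α) :
    ((∃ r ∈ A, x ∈ r) ∧ f x < f y) ∨ (x ∈ p ∧ f x = f y) ∨ ((∃ r ∈ B, x ∈ r) ∧ f y < f x) := by
  obtain ⟨-, hpB, hA⟩ := List.pairwise_append.1 h.pairwise_lt
  obtain ⟨r, hr, hx⟩ := h.cover x
  rcases List.mem_append.1 hr with hrA | hr
  · exact .inl ⟨⟨r, hrA, hx⟩, hA r hrA p List.mem_cons_self x hx y hy⟩
  rcases List.mem_cons.1 hr with rfl | hrB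
  · exact .inr (.inl ⟨hx, h.eq_of_mem r (by simp) x hx y hy⟩)
  · exact .inr (.inr ⟨⟨r, hrB, hx⟩, List.rel_of_pairwise_cons hpB hrB y hy x hx⟩)

lemma lt_iff_exists_mem (h : IsLevelSeq f (A ++ p :: B)) (hy : y ∈ p) :
    f x < f y ↔ ∃ r ∈ A, x ∈ r := by
  refine ⟨fun hlt => ?_, fun ⟨r, hr, hx⟩ => ?_⟩
  · rcases h.trichotomy hy x with ⟨hx, -⟩ | ⟨-, heq⟩ | ⟨-, hgt⟩
    · exact hx
    · exact absurd heq hlt.ne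
    · exact absurd hgt hlt.not_gt
  · exact (List.pairwise_append.1 h.pairwise_lt).2.2 r hr p List.mem_cons_self x hx y hy

lemma eq_iff_mem (h : IsLevelSeq f η) (hp : p ∈ η) (hy : y ∈ p) : f x = f y ↔ x ∈ p := by
  refine ⟨fun heq => ?_, fun hx => h.eq_of_mem p hp x hx y hy⟩
  obtain ⟨A, B, rfl⟩ := List.append_of_mem hp
  rcases h.trichotomy hy x with ⟨-, hlt⟩ | ⟨hx, -⟩ | ⟨-, hgt⟩
  · exact absurd heq hlt.ne
  · exact hx
  · exact absurd heq hgt.ne'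

lemma eq_iff_eq (hf : IsLevelSeq f η) (hg : IsLevelSeq g η) : f x = f y ↔ g x = g y := by
  obtain ⟨p, hp, hy⟩ := hf.cover y
  rw [hf.eq_iff_mem hp hy, hg.eq_iff_mem hp hy]

lemma nodup (h : IsLevelSeq f η) : η.Nodup := by
  refine h.pairwise_lt.imp_of_mem ?_
  rintro p q hp - hlt rfl
  obtain ⟨x, hx⟩ := h.nonempty p hp
  exact lt_irrefl _ (hlt x hx x hx)

lemma subset (h : IsLevelSeq f η) (h' : IsLevelSeq f η') : η ⊆ η' := by
  intro p hp
  obtain ⟨x, hx⟩ := h.nonempty p hp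
  obtain ⟨q, hq, hxq⟩ := h'.cover x
  have hpq : p = q := by
    ext y
    rw [← h.eq_iff_mem hp hx, ← h'.eq_iff_mem hq hxq]
  exact hpq ▸ hq

lemma unique (h : IsLevelSeq f η) (h' : IsLevelSeq f η') : η = η' := by
  have hperm : η.Perm η' := (List.perm_ext_iff_of_nodup h.nodup h'.nodup).2
    fun p => ⟨fun hp => h.subset h' hp, fun hp => h'.subset h hp⟩
  refine hperm.eq_of_pairwise (fun p q hp hq hpq hqp => ?_) h.pairwise_lt h'.pairwise_lt
  obtain ⟨x, hx⟩ := h.nonempty p hp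
  obtain ⟨y, hy⟩ := h'.nonempty q hq
  exact absurd (hpq x hx y hy) (hqp y hy x hx).not_gt

lemma congr (h : IsLevelSeq f η) (hfg : ∀ x y, f x < f y ↔ g x < g y) : IsLevelSeq g η where
  nonempty := h.nonempty
  cover := h.cover
  eq_of_mem p hp x hx y hy := by
    have heq := h.eq_of_mem p hp x hx y hy
    exact le_antisymm (not_lt.1 ((hfg y x).not.1 heq.not_gt))
      (not_lt.1 ((hfg x y).not.1 heq.not_lt))
  pairwise_lt := h.pairwise_lt.imp fun hlt x hx y hy => (hfg x y).1 (hlt x hx y hy)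

lemma congr_of_notMem_uIcc (h : IsLevelSeq f η) (a : α) (hfg : ∀ x ≠ a, g x = f x)
    (ha : ∀ x ≠ a, f x ∉ Set.uIcc (f a) (g a)) : IsLevelSeq g η := by
  simp only [Set.mem_uIcc] at ha
  refine h.congr fun x y => ?_
  by_cases hx : x = a <;> by_cases hy : y = a <;> grind

end IsLevelSeq

end LevelSeq

section RelPos

variable {k : ℕ} {v₀ v w : Val k} {η η' : PatSeq k} {x : Fin (k + 1) × Bool} {d : ℝ}

/-- The relative position `fract(rel(v_b))(i)` of the index `x = i^b`, where `v₁ = v`. -/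
noncomputable def relPos (v₀ v : Val k) (x : Fin (k + 1) × Bool) : ℝ :=
  relFract (bval v₀ v x.2) x.1

lemma patternOf_iff_isLevelSeq :
    PatternOf v₀ v η ↔ IsPattern η ∧ IsLevelSeq (relPos v₀ v) η := by
  refine and_congr_right fun hη => ⟨fun h => ?_, fun h => ?_⟩
  · refine ⟨hη.2.1, hη.2.2.2.2, fun p hp x hx y hy => ?_, ?_⟩
    · obtain ⟨m, rfl⟩ := List.get_of_mem hp
      exact (h m m x.2 y.2 x.1 y.1 hx hy).1.2 rfl
    · exact List.pairwise_iff_get.2 fun m m' hm x hx y hy =>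
        (h m m' x.2 y.2 x.1 y.1 hx hy).2.2 hm
  · intro m m' b b' i i' hi hi'
    have heq : m = m' → relPos v₀ v (i, b) = relPos v₀ v (i', b') := by
      rintro rfl
      exact h.eq_of_mem _ (List.get_mem _ _) _ hi _ hi'
    have hlt (hm : m < m') : relPos v₀ v (i, b) < relPos v₀ v (i', b') :=
      List.pairwise_iff_get.1 h.pairwise_lt m m' hm _ hi _ hi'
    have hgt (hm : m' < m) : relPos v₀ v (i', b') < relPos v₀ v (i, b) :=
      List.pairwise_iff_get.1 h.pairwise_lt m' m hm _ hi' _ hi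
    change (relPos v₀ v (i, b) = relPos v₀ v (i', b') ↔ m = m') ∧
      (relPos v₀ v (i, b) < relPos v₀ v (i', b') ↔ m < m')
    grind

lemma PatternOf.isLevelSeq (h : PatternOf v₀ v η) : IsLevelSeq (relPos v₀ v) η :=
  (patternOf_iff_isLevelSeq.1 h).2

lemma PatternOf.unique (h : PatternOf v₀ v η) (h' : PatternOf v₀ v η') : η = η' :=
  h.isLevelSeq.unique h'.isLevelSeq

lemma relPos_true_of_ne_zero (v₀ v : Val k) {j : Fin (k + 1)} (hj : j ≠ 0) :
    relPos v₀ v (j, true) = Int.fract (v j - v 0) := by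
  simp only [relPos, bval, relFract, hj, if_false]
  refine Int.fract_eq_fract.2 ⟨1 + ⌊v 0⌋ - ⌊v j⌋ - ⌊1 - Int.fract (v 0)⌋, ?_⟩
  push_cast
  linarith [Int.self_sub_floor (1 - Int.fract (v 0)), Int.self_sub_floor (v j),
    Int.self_sub_floor (v 0)]

lemma relPos_shift_of_ne (v₀ v : Val k) (d : ℝ) (hx : x ≠ (0, true)) :
    relPos v₀ (shift v d) x = relPos v₀ v x := by
  obtain ⟨j, _ | _⟩ := x
  · rfl
  · have hj : j ≠ 0 := by
      rintro rfl
      exact hx rfl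
    rw [relPos_true_of_ne_zero _ _ hj, relPos_true_of_ne_zero _ _ hj]
    simp [shift]

lemma relPos_now (v₀ v : Val k) : relPos v₀ v (0, true) = Int.fract (1 - Int.fract (v 0)) :=
  rfl

lemma relPos_shift_now (v₀ v : Val k) (hd : 0 < d) (hle : d ≤ 1 - Int.fract (v 0)) :
    relPos v₀ (shift v d) (0, true) = 1 - Int.fract (v 0) - d := by
  rw [relPos_now, Int.fract_eq_iff]
  refine ⟨by linarith, by linarith [Int.fract_nonneg (v 0)], ⌊v 0 + d⌋ - ⌊v 0⌋, ?_⟩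
  simp only [shift, Int.fract]
  push_cast
  ring

lemma Initial.relPos_zero_false (h0 : Initial v₀) (v : Val k) : relPos v₀ v (0, false) = 0 := by
  simp [relPos, bval, relFract, show v₀ 0 = 0 from h0]

lemma relPos_now_of_ne_relPos_zero_false (h0 : Initial v₀)
    (hne : relPos v₀ v (0, false) ≠ relPos v₀ v (0, true)) :
    relPos v₀ v (0, true) = 1 - Int.fract (v 0) := by
  rw [h0.relPos_zero_false, relPos_now] at hne
  have hpos : Int.fract (v 0) ≠ 0 := fun h => hne (by simp [h])
  rw [relPos_now, Int.fract_eq_self]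
  exact ⟨by linarith [Int.fract_lt_one (v 0)],
    by linarith [(Int.fract_nonneg (v 0)).lt_of_ne' hpos]⟩

/-- The index with time-independent relative position that `0¹` meets whenever the clock `j` is
integral. For `j = 0` this is `0⁰`, whose relative position is `0` in an initialized pair. -/
def landmark (j : Fin (k + 1)) : Fin (k + 1) × Bool :=
  if j = 0 then (0, false) else (j, true)

lemma landmark_ne_now (j : Fin (k + 1)) : landmark j ≠ (0, true) := by
  unfold landmark
  split_ifs with hj <;> simp [hj]

lemma relPos_landmark_eq_relPos_now_iff (h0 : Initial v₀) (v : Val k) (j : Fin (k + 1)) :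
    relPos v₀ v (landmark j) = relPos v₀ v (0, true) ↔ Int.fract (v j) = 0 := by
  unfold landmark
  split_ifs with hj
  · subst hj
    rw [h0.relPos_zero_false, relPos_now, eq_comm, sub_eq_neg_add, Int.fract_add_one,
      Int.fract_neg_eq_zero, Int.fract_fract]
  · have hnow : relPos v₀ v (0, true) = Int.fract (-v 0) := by
      rw [relPos_now, Int.fract_eq_fract]
      exact ⟨1 + ⌊v 0⌋, by rw [Int.fract]; push_cast; ring⟩
    rw [relPos_true_of_ne_zero _ _ hj, hnow, Int.fract_eq_fract, Int.fract_eq_zero_iff,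
      sub_neg_eq_add, sub_add_cancel]
    simp only [Set.mem_range, eq_comm]

lemma PatternOf.congr_of_notMem_uIcc (h : PatternOf v₀ v η)
    (hfixed : ∀ x ≠ (0, true), relPos v₀ w x = relPos v₀ v x)
    (hnow : ∀ x ≠ (0, true),
      relPos v₀ v x ∉ Set.uIcc (relPos v₀ v (0, true)) (relPos v₀ w (0, true))) :
    PatternOf v₀ w η :=
  patternOf_iff_isLevelSeq.2
    ⟨h.1, h.isLevelSeq.congr_of_notMem_uIcc (0, true) hfixed hnow⟩

end RelPos

section NextPattern

variable {k : ℕ} {A B η : PatSeq k} {p : Finset (Fin (k + 1) × Bool)}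
  {β : Type*} [LinearOrder β] {f g : Fin (k + 1) × Bool → β} {x : Fin (k + 1) × Bool}

lemma nowIdx_append_cons_s9 (hA : ∀ r ∈ A, (0, true) ∉ r) (hp : (0, true) ∈ p) :
    nowIdx (A ++ p :: B) = A.length := by
  rw [nowIdx, List.findIdx_append, List.findIdx_eq_length_of_false (by simpa using hA)]
  simp [List.findIdx_cons, hp]

lemma exists_eq_append_now_cons (hη : IsPattern η) :
    ∃ A p B, η = A ++ p :: B ∧ (0, true) ∈ p ∧ ∀ r ∈ A, (0, true) ∉ r := by
  obtain ⟨-, -, hdisj, -, hcover⟩ := hη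
  obtain ⟨p, hp, hnow⟩ := hcover (0, true)
  obtain ⟨A, B, rfl⟩ := List.append_of_mem hp
  have hA := (List.pairwise_append.1 hdisj).2.2
  exact ⟨A, p, B, rfl, hnow,
    fun r hr hnowr => Finset.disjoint_left.1 (hA r hr p List.mem_cons_self) hnowr hnow⟩

lemma zero_false_eq_iff_eq_nil (hη : IsPattern (A ++ p :: B)) (hf : IsLevelSeq f (A ++ p :: B))
    (hx : x ∈ p) : f (0, false) = f x ↔ A = [] := by
  have hhead := hη.2.2.2.1
  rcases A with _ | ⟨r, A⟩
  · exact iff_of_true (hf.eq_of_mem p (by simp) _ (by simpa using hhead) _ hx) rfl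
  · exact iff_of_false ((hf.lt_iff_exists_mem hx).2 ⟨r, by simp, by simpa using hhead⟩).ne
      (List.cons_ne_nil r A)

lemma IsMergePat.exists_eq (hm : IsMergePat η) (hη : IsPattern η) :
    ∃ A q B, η = A ++ q :: {(0, true)} :: B ∧ nowIdx η = A.length + 1 ∧
      NextPat η = A ++ (q ∪ {(0, true)}) :: B := by
  obtain ⟨A, p, B, rfl, hp, hA⟩ := exists_eq_append_now_cons hη
  have hidx := nowIdx_append_cons_s9 (B := B) hA hp
  obtain rfl : p = {(0, true)} := by simpa [IsMergePat, hidx, List.getD_append_right] using hm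
  rcases List.eq_nil_or_concat A with rfl | ⟨A, q, rfl⟩
  · simpa using hη.2.2.2.1
  simp only [List.concat_eq_append, List.append_assoc, List.cons_append, List.nil_append,
    List.length_append, List.length_singleton] at hidx ⊢
  refine ⟨A, q, B, rfl, hidx, ?_⟩
  have hsub : A.length + 1 + 1 - A.length = 2 := by lia
  simp [NextPat, hidx, List.drop_append, hsub, add_assoc]

lemma IsSplitPat.exists_eq (hs : IsSplitPat η) (hη : IsPattern η) :
    ∃ A p B, η = A ++ p :: B ∧ (0, true) ∈ p ∧ NextPat η =
      if A = [] then (p \ {(0, true)}) :: B ++ [{(0, true)}]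
      else A ++ {(0, true)} :: (p \ {(0, true)}) :: B := by
  obtain ⟨A, p, B, rfl, hp, hA⟩ := exists_eq_append_now_cons hη
  have hidx := nowIdx_append_cons_s9 (B := B) hA hp
  have hne : p ≠ {(0, true)} := by
    simpa [IsSplitPat, IsMergePat, hidx, List.getD_append_right] using hs
  refine ⟨A, p, B, rfl, hp, ?_⟩
  split_ifs with hnil
  · subst hnil
    simp_all [NextPat]
  · simp [NextPat, hidx, hne, hnil, List.drop_append]

lemma IsMergePat.ne_now (hm : IsMergePat η) (hη : IsPattern η) (hf : IsLevelSeq f η)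
    (hx : x ≠ (0, true)) : f x ≠ f (0, true) := by
  obtain ⟨A, q, B, rfl, -, -⟩ := hm.exists_eq hη
  rwa [Ne, hf.eq_iff_mem (p := {(0, true)}) (by simp) (by simp), Finset.mem_singleton]

lemma IsMergePat.lt_now_iff_le_now (hm : IsMergePat η) (hη : IsPattern η) (hf : IsLevelSeq f η)
    (hg : IsLevelSeq g (NextPat η)) (hx : x ≠ (0, true)) :
    f x < f (0, true) ↔ g x ≤ g (0, true) := by
  obtain ⟨A, q, B, rfl, -, hnext⟩ := hm.exists_eq hη
  rw [hnext] at hg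
  rw [List.append_cons] at hf
  rw [hf.lt_iff_exists_mem (by simp), le_iff_lt_or_eq, hg.lt_iff_exists_mem (by simp),
    hg.eq_iff_mem (p := q ∪ {(0, true)}) (by simp) (by simp)]
  simp [hx, or_and_right, exists_or]

lemma IsSplitPat.ne_now (hs : IsSplitPat η) (hη : IsPattern η) (hg : IsLevelSeq g (NextPat η))
    (hx : x ≠ (0, true)) : g x ≠ g (0, true) := by
  obtain ⟨A, p, B, -, -, hnext⟩ := hs.exists_eq hη
  have hmem : {(0, true)} ∈ NextPat η := by
    rw [hnext]
    split_ifs <;> simp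
  rwa [Ne, hg.eq_iff_mem hmem (by simp), Finset.mem_singleton]

lemma IsSplitPat.lt_now_of_zero_false_eq (hs : IsSplitPat η) (hη : IsPattern η)
    (hf : IsLevelSeq f η) (hg : IsLevelSeq g (NextPat η)) (hzero : f (0, false) = f (0, true))
    (hx : x ≠ (0, true)) : g x < g (0, true) := by
  obtain ⟨A, p, B, rfl, hp, hnext⟩ := hs.exists_eq hη
  rw [if_pos ((zero_false_eq_iff_eq_nil hη hf hp).1 hzero)] at hnext
  rw [hnext] at hg
  rcases hg.trichotomy (Finset.mem_singleton_self _) x with ⟨-, hlt⟩ | ⟨hmem, -⟩ | ⟨hmem, -⟩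
  · exact hlt
  · exact absurd (Finset.mem_singleton.1 hmem) hx
  · simp at hmem

lemma IsSplitPat.lt_now_iff_lt_now (hs : IsSplitPat η) (hη : IsPattern η)
    (hf : IsLevelSeq f η) (hg : IsLevelSeq g (NextPat η)) (hzero : f (0, false) ≠ f (0, true)) :
    f x < f (0, true) ↔ g x < g (0, true) := by
  obtain ⟨A, p, B, rfl, hp, hnext⟩ := hs.exists_eq hη
  rw [if_neg ((zero_false_eq_iff_eq_nil hη hf hp).not.1 hzero)] at hnext
  rw [hnext] at hg
  rw [hf.lt_iff_exists_mem hp, hg.lt_iff_exists_mem (Finset.mem_singleton_self _)]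

lemma nextD_apply (hη : IsPattern η) (hη' : IsPattern (NextPat η))
    (hg : IsLevelSeq g (NextPat η)) (u : DVal k) (j : Fin (k + 1)) :
    nextD η u j = if g (landmark j) = g (0, true) then u j + 1 else u j := by
  by_cases hm : IsMergePat η
  · obtain ⟨A, q, B, rfl, hidx, hnext⟩ := hm.exists_eq hη
    rw [hnext] at hg hη'
    by_cases hj : j = 0
    · subst hj
      simp [nextD, hidx, landmark,
        zero_false_eq_iff_eq_nil hη' hg (x := (0, true)) (by simp)]
    · have hmem : g (j, true) = g (0, true) ↔ (j, true) ∈ q := by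
        rw [hg.eq_iff_mem (p := q ∪ {(0, true)}) (by simp) (by simp)]
        simp [hj]
      simp [nextD, hidx, landmark, hj, hmem]
  · rw [if_neg (IsSplitPat.ne_now hm hη hg (landmark_ne_now j))]
    exact congrFun (if_neg hm) j

end NextPattern

section PatternChange

variable {k : ℕ} {v₀ v : Val k} {η η' : PatSeq k} {d δ : ℝ}

lemma oneChange_iff (hη : PatternOf v₀ v η) (hη' : PatternOf v₀ (shift v δ) η') :
    OneChange v₀ v δ ↔ NextPat η = η' ∧
      ((∀ d, 0 < d → d < δ → PatternOf v₀ (shift v d) η) ∨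
        (∀ d, 0 < d → d < δ → PatternOf v₀ (shift v d) η')) := by
  constructor
  · rintro ⟨η₁, η₂, hη₁, hη₂, hnext, hbetween⟩
    obtain rfl := hη.unique hη₁
    obtain rfl := hη'.unique hη₂
    exact ⟨hnext, hbetween⟩
  · exact fun ⟨hnext, hbetween⟩ => ⟨η, η', hη, hη', hnext, hbetween⟩

lemma nextD_intPart_eq_intPart_shift_iff (hv : IsVal v) (h0 : Initial v₀) (hδ : 0 < δ)
    (hη : IsPattern η) (hη' : PatternOf v₀ (shift v δ) (NextPat η)) :
    nextD η (intPart v) = intPart (shift v δ) ↔ ∀ j, δ ≤ 1 - Int.fract (v j) := by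
  rw [funext_iff]
  refine forall_congr' fun j => ?_
  have hcast (w : Val k) (hw : 0 ≤ w j) : (intPart w j : ℤ) = ⌊w j⌋ :=
    Int.toNat_of_nonneg (Int.floor_nonneg.2 hw)
  have hshift : 0 ≤ shift v δ j := add_nonneg (hv j) hδ.le
  simp only [nextD_apply hη hη'.1 hη'.isLevelSeq, relPos_landmark_eq_relPos_now_iff h0]
  rw [eq_comm, ← Int.natCast_inj, ← floor_add_eq_ite_fract_iff (v j) hδ, hcast _ hshift]
  push_cast
  rw [hcast v (hv j)]
  rfl

lemma patternOf_shift_of_isMergePat (h0 : Initial v₀) (hm : IsMergePat η)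
    (hη : PatternOf v₀ v η) (hη' : PatternOf v₀ (shift v δ) (NextPat η))
    (hδ : δ ≤ 1 - Int.fract (v 0)) (hd : 0 < d) (hdδ : d < δ) :
    PatternOf v₀ (shift v d) η := by
  have hstart := relPos_now_of_ne_relPos_zero_false h0
    (hm.ne_now hη.1 hη.isLevelSeq (x := (0, false)) (by simp))
  refine hη.congr_of_notMem_uIcc (fun x => relPos_shift_of_ne v₀ v d) fun x hx => ?_
  have hne := hm.ne_now hη.1 hη.isLevelSeq hx
  have hiff := hm.lt_now_iff_le_now hη.1 hη.isLevelSeq hη'.isLevelSeq hx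
  rw [hstart] at hne hiff
  rw [relPos_shift_of_ne _ _ _ hx, relPos_shift_now _ _ (hd.trans hdδ) hδ] at hiff
  rw [hstart, relPos_shift_now _ _ hd (hdδ.le.trans hδ), Set.mem_uIcc]
  grind

lemma patternOf_shift_of_isSplitPat (h0 : Initial v₀) (hs : IsSplitPat η)
    (hη : PatternOf v₀ v η) (hη' : PatternOf v₀ (shift v δ) (NextPat η))
    (hδ : δ ≤ 1 - Int.fract (v 0)) (hd : 0 < d) (hdδ : d < δ) :
    PatternOf v₀ (shift v d) (NextPat η) := by
  refine hη'.congr_of_notMem_uIcc (fun x hx => ?_) fun x hx => ?_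
  · rw [relPos_shift_of_ne _ _ _ hx, relPos_shift_of_ne _ _ _ hx]
  have hend := relPos_shift_now v₀ v (hd.trans hdδ) hδ
  rw [relPos_shift_of_ne _ _ _ hx, hend, relPos_shift_now _ _ hd (hdδ.le.trans hδ),
    Set.mem_uIcc]
  by_cases hzero : relPos v₀ v (0, false) = relPos v₀ v (0, true)
  · have hlt := hs.lt_now_of_zero_false_eq hη.1 hη.isLevelSeq hη'.isLevelSeq hzero hx
    rw [relPos_shift_of_ne _ _ _ hx, hend] at hlt
    grind
  · have hne := hs.ne_now hη.1 hη'.isLevelSeq hx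
    have hiff := hs.lt_now_iff_lt_now hη.1 hη.isLevelSeq hη'.isLevelSeq hzero (x := x)
    rw [relPos_shift_of_ne _ _ _ hx, hend] at hne hiff
    rw [relPos_now_of_ne_relPos_zero_false h0 hzero] at hiff
    grind

lemma le_one_sub_fract_of_forall_patternOf (h0 : Initial v₀) (hδ : 0 < δ)
    (h : ∀ d, 0 < d → d < δ → PatternOf v₀ (shift v d) η) (j : Fin (k + 1)) :
    δ ≤ 1 - Int.fract (v j) := by
  refine (forall_fract_add_ne_zero_iff (v j) δ).1 fun d hd hdδ hzero => ?_
  obtain ⟨e, he, heδ, hne⟩ := exists_fract_add_ne_zero (v j) hδ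
  have hmeet := (relPos_landmark_eq_relPos_now_iff h0 (shift v d) j).2 hzero
  rw [(h d hd hdδ).isLevelSeq.eq_iff_eq (h e he heδ).isLevelSeq] at hmeet
  exact hne ((relPos_landmark_eq_relPos_now_iff h0 (shift v e) j).1 hmeet)

end PatternChange

/-- Lemma `progresspatternchange`. For any initialized pair `(v₀,v)`
and any `δ > 0`, `next([(v₀,v)], int(v)) = ([(v₀,v+δ)], int(v+δ))` iff `v` has one
pattern change for `δ`. -/
theorem progress_pattern_change (k : ℕ) (hk : 1 ≤ k) (v₀ v : Val k)
    (hv₀ : IsVal v₀) (hv : IsVal v) (h0 : Initial v₀)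
    (δ : ℝ) (hδ : 0 < δ)
    (η η' : PatSeq k) (hη : PatternOf v₀ v η) (hη' : PatternOf v₀ (shift v δ) η') :
    nextPair η (intPart v) = (η', intPart (shift v δ)) ↔ OneChange v₀ v δ := by
  rw [oneChange_iff hη hη', nextPair, Prod.mk.injEq]
  refine and_congr_right ?_
  rintro rfl
  rw [nextD_intPart_eq_intPart_shift_iff hv h0 hδ hη.1 hη']
  refine ⟨fun h => ?_, fun h => ?_⟩
  · by_cases hm : IsMergePat η
    · exact .inl fun d => patternOf_shift_of_isMergePat h0 hm hη hη' (h 0)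
    · exact .inr fun d => patternOf_shift_of_isSplitPat h0 hm hη hη' (h 0)
  · exact h.elim (le_one_sub_fract_of_forall_patternOf h0 hδ)
      (le_one_sub_fract_of_forall_patternOf h0 hδ)

end PTApaper
end
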